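/- For every element h of H(0), one has ψ₀(h) ∈ N(1) × N(1) if and only if h ∈ N(2). Equivalently, the kernel of the induced homomorphism ψ₁ : H(1) → Γ(1) × Γ(1) equals N(2)/N(1), the normal subgroup of Γ(1) generated by the images of (ac)⁸ = σ((ad)⁴) and (adacac)⁴. -/

import Mathlib

/-- The four-letter alphabet `{a, b, c, d}`. -/
inductive L4 : Type
  | a | b | c | d
  deriving DecidableEq

/-- The free group `F = F(a, b, c, d)`. -/
abbrev F4 : Type := FreeGroup L4

def ga : F4 := FreeGroup.of L4.a
def gb : F4 := FreeGroup.of L4.b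
def gc : F4 := FreeGroup.of L4.c
def gd : F4 := FreeGroup.of L4.d

/-- The endomorphism `σ` of `F(a,b,c,d)`:
`σ(a) = aca`, `σ(b) = d`, `σ(c) = b`, `σ(d) = c`. -/
def sigma : F4 →* F4 :=
  FreeGroup.lift fun x => match x with
    | L4.a => ga * gc * ga
    | L4.b => gd
    | L4.c => gb
    | L4.d => gc

/-- A seven-letter alphabet corresponding to the free generators
`b, c, d, aba, aca, ada, a²` of the index-2 subgroup `H(0)` of `F`. -/
inductive E7 : Type
  | eb | ec | ed | eaba | eaca | eada | eaa
  deriving DecidableEq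

/-- The embedding of the free group on the seven generators into `F`, sending
the generators to `b, c, d, aba, aca, ada, a²`; its range is `H(0)`. -/
def iota : FreeGroup E7 →* F4 :=
  FreeGroup.lift fun x => match x with
    | E7.eb => gb
    | E7.ec => gc
    | E7.ed => gd
    | E7.eaba => ga * gb * ga
    | E7.eaca => ga * gc * ga
    | E7.eada => ga * gd * ga
    | E7.eaa => ga ^ 2

/-- The homomorphism `ψ₀ : H(0) → F × F` (written on the free generators of
`H(0)`): `ψ₀(b) = (a,c)`, `ψ₀(c) = (a,d)`, `ψ₀(d) = (1,b)`, `ψ₀(aba) = (c,a)`,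
`ψ₀(aca) = (d,a)`, `ψ₀(ada) = (b,1)`, `ψ₀(a²) = (1,1)`. -/
def psi : FreeGroup E7 →* F4 × F4 :=
  FreeGroup.lift fun x => match x with
    | E7.eb => (ga, gc)
    | E7.ec => (ga, gd)
    | E7.ed => (1, gb)
    | E7.eaba => (gc, ga)
    | E7.eaca => (gd, ga)
    | E7.eada => (gb, 1)
    | E7.eaa => (1, 1)

/-- The relator set `R(i)` of the presentation `Γ(i)`, `1 ≤ i < ∞`:
`R(1) = {a², b², c², d², bcd, (ad)⁴}` and, for `i ≥ 2`,
`R(i) = R(1) ∪ {σʲ((ad)⁴) : 1 ≤ j ≤ i−1} ∪ {σʲ((adacac)⁴) : 0 ≤ j ≤ i−2}`. -/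
def Rpres (i : ℕ) : Set F4 :=
  {ga ^ 2, gb ^ 2, gc ^ 2, gd ^ 2, gb * gc * gd, (ga * gd) ^ 4}
    ∪ {w | ∃ j : ℕ, 1 ≤ j ∧ j + 1 ≤ i ∧ w = (⇑sigma)^[j] ((ga * gd) ^ 4)}
    ∪ {w | ∃ j : ℕ, j + 2 ≤ i ∧ w = (⇑sigma)^[j] ((ga * gd * ga * gc * ga * gc) ^ 4)}

/-- The Lysenok relator set
`R(∞) = {a², b², c², d², bcd} ∪ {σⁱ((ad)⁴) : i ≥ 0} ∪ {σⁱ((adacac)⁴) : i ≥ 0}`. -/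
def Rinf : Set F4 :=
  {ga ^ 2, gb ^ 2, gc ^ 2, gd ^ 2, gb * gc * gd}
    ∪ {w | ∃ i : ℕ, w = (⇑sigma)^[i] ((ga * gd) ^ 4)}
    ∪ {w | ∃ i : ℕ, w = (⇑sigma)^[i] ((ga * gd * ga * gc * ga * gc) ^ 4)}

/-!
Let `σ₀ : Γ(1) → Γ(2)` be induced by `σ`, and `σ₁` its conjugate by `a`. Up to the two generators
`d` and `ada`, these invert the coordinates of `ψ₀`: the map `e ↦ σ₀ (ψ₀ e).2` is the identity on
`b`, `c`, `d` and `aca`, while `e ↦ σ₁ (ψ₀ e).1` is the identity modulo `d` on all seven generators.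

The relators of `Γ(2)` hold in the wreath product of `Γ(1)` with the swap of two coordinates, into
which `ψ₀` extends; hence `N(2)` is contained in the preimage of `N(1) × N(1)`.

Conversely, let `K ≤ Γ(2)` be generated by the conjugates of `d` under the dihedral group
`⟨c, aca⟩` of order dividing 8. The relators `(ad)⁴` and `(adacac)⁴` say exactly that `ada` commutes
with `d` and with its conjugate by `c · aca`, and so `ada` centralizes `K` and `K` is normal in the
image of `H(0)`. If `ψ₀ e ∈ N(1) × N(1)`, the first coordinate puts the image of `e` in `K`. There
it can be rewritten as a word in `c`, `d`, `aca`, which is recovered from its second coordinate and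
is therefore trivial.
-/

namespace KerPsi

section Involutions

variable {G : Type*} [Group G] {x y : G}

lemma inv_eq_self_of_sq_eq_one (hx : x ^ 2 = 1) : x⁻¹ = x :=
  inv_eq_of_mul_eq_one_left (by rwa [← sq])

lemma mul_self_mul_of_sq_eq_one (hx : x ^ 2 = 1) (y : G) : x * (x * y) = y := by
  rw [← mul_assoc, ← sq, hx, one_mul]

lemma mul_inv_eq_swap_of_sq_eq_one (hx : x ^ 2 = 1) (hy : y ^ 2 = 1) : (x * y)⁻¹ = y * x := by
  rw [mul_inv_rev, inv_eq_self_of_sq_eq_one hx, inv_eq_self_of_sq_eq_one hy]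

lemma commute_of_sq_eq_one (hx : x ^ 2 = 1) (hy : y ^ 2 = 1) (hxy : (x * y) ^ 2 = 1) :
    Commute x y := by
  rw [commute_iff_eq, ← mul_inv_eq_swap_of_sq_eq_one hx hy, inv_eq_self_of_sq_eq_one hxy]

lemma mul_pow_swap_eq_one {n : ℕ} (hx : x ^ 2 = 1) (hy : y ^ 2 = 1) (hxy : (x * y) ^ n = 1) :
    (y * x) ^ n = 1 := by
  rw [← mul_inv_eq_swap_of_sq_eq_one hx hy, inv_pow, hxy, inv_one]

lemma mul_sq_swap_of_mul_pow_four_eq_one (hx : x ^ 2 = 1) (hy : y ^ 2 = 1)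
    (hxy : (x * y) ^ 4 = 1) : (x * y) ^ 2 = (y * x) ^ 2 := by
  have hsq : ((x * y) ^ 2) ^ 2 = 1 := by rw [← pow_mul, hxy]
  rw [← mul_inv_eq_swap_of_sq_eq_one hx hy, inv_pow, inv_eq_self_of_sq_eq_one hsq]

lemma conj_sq_eq_one (hy : y ^ 2 = 1) : MulAut.conj x y ^ 2 = 1 := by
  rw [← map_pow, hy, map_one]

lemma mul_mul_self_sq_eq_one (hx : x ^ 2 = 1) (hy : y ^ 2 = 1) : (x * y * x) ^ 2 = 1 := by
  simpa only [MulAut.conj_apply, inv_eq_self_of_sq_eq_one hx] using conj_sq_eq_one (x := x) hy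

lemma mem_normalizer_of_sq_eq_one {S : Set G} (hx : x ^ 2 = 1)
    (hS : ∀ s ∈ S, MulAut.conj x s ∈ S) : x ∈ Subgroup.normalizer S := by
  have conj_conj (s : G) : MulAut.conj x (MulAut.conj x s) = s := by
    rw [← MulAut.mul_apply, ← map_mul, ← sq, hx, map_one, MulAut.one_apply]
  rw [Subgroup.mem_normalizer_iff_conj_image_eq]
  exact (Set.image_subset_iff.2 hS).antisymm fun s hs ↦ ⟨_, hS s hs, conj_conj s⟩

end Involutions

section Generators

variable {α G : Type*} [Group G] {K : Subgroup G} {f g : FreeGroup α →* G}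

lemma map_mem_of_forall_of_mem (hg : ∀ x, g (FreeGroup.of x) ∈ K) (e : FreeGroup α) : g e ∈ K := by
  have range_le : (FreeGroup.lift fun x ↦ g (FreeGroup.of x)).range ≤ K :=
    FreeGroup.range_lift_le (Set.range_subset_iff.2 hg)
  have lift_eq : FreeGroup.lift (fun x ↦ g (FreeGroup.of x)) = g :=
    FreeGroup.ext_hom _ _ fun x ↦ by simp
  exact range_le ⟨e, by rw [lift_eq]⟩

lemma map_mul_inv_map_mem_of_forall_of_mem
    (hg : ∀ x, g (FreeGroup.of x) ∈ Subgroup.normalizer (K : Set G))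
    (hfg : ∀ x, f (FreeGroup.of x) * (g (FreeGroup.of x))⁻¹ ∈ K) (e : FreeGroup α) :
    f e * (g e)⁻¹ ∈ K := by
  have conj_mem (e : FreeGroup α) {k : G} (hk : k ∈ K) : g e * k * (g e)⁻¹ ∈ K :=
    (Subgroup.mem_normalizer_iff.1 (map_mem_of_forall_of_mem hg e) k).1 hk
  induction e using FreeGroup.induction_on with
  | C1 => simp
  | of x => exact hfg x
  | inv_of x hx => simpa [mul_assoc] using conj_mem (FreeGroup.of x)⁻¹ (inv_mem hx)
  | mul e₁ e₂ h₁ h₂ => simpa [mul_assoc] using mul_mem h₁ (conj_mem e₁ h₂)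

end Generators

section DihedralConjugates

variable {G : Type*} [Group G] {p q d : G}

/-- The conjugates of `d` under the dihedral group `⟨p, q⟩`, for involutions `p`, `q` with
`(pq)⁴ = 1` and `d` commuting with `p`: the four conjugators represent the cosets of `⟨p⟩`. -/
def dihedralConjugates (p q d : G) : Set G :=
  (fun t ↦ MulAut.conj t d) '' {1, q, p * q, q * p * q}

lemma forall_mem_dihedralConjugates {P : G → Prop} :
    (∀ s ∈ dihedralConjugates p q d, P s) ↔
      P d ∧ P (MulAut.conj q d) ∧ P (MulAut.conj (p * q) d) ∧ P (MulAut.conj (q * p * q) d) := by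
  simp only [dihedralConjugates, Set.forall_mem_image, Set.mem_insert_iff, Set.mem_singleton_iff,
    forall_eq_or_imp, forall_eq, map_one, MulAut.one_apply]

lemma conj_mem_dihedralConjugates {t : G} (ht : t ∈ ({1, q, p * q, q * p * q} : Set G)) :
    MulAut.conj t d ∈ dihedralConjugates p q d :=
  Set.mem_image_of_mem _ ht

lemma self_mem_dihedralConjugates : d ∈ dihedralConjugates p q d := by
  simpa using conj_mem_dihedralConjugates (p := p) (q := q) (d := d) (t := 1) (by simp)

lemma left_mem_normalizer_dihedralConjugates (hp : p ^ 2 = 1) (hq : q ^ 2 = 1)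
    (hpq : (p * q) ^ 4 = 1) (hpd : Commute p d) :
    p ∈ Subgroup.normalizer (dihedralConjugates p q d) := by
  have conj_p : MulAut.conj p d = d := by rw [MulAut.conj_apply, hpd.eq, mul_inv_cancel_right]
  have braid : p * (q * p * q) = q * p * q * p := by
    simpa only [sq, mul_assoc] using mul_sq_swap_of_mul_pow_four_eq_one hp hq hpq
  refine mem_normalizer_of_sq_eq_one hp (forall_mem_dihedralConjugates.2 ⟨?_, ?_, ?_, ?_⟩)
  · rw [conj_p]
    exact self_mem_dihedralConjugates
  · rw [← MulAut.mul_apply, ← map_mul]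
    exact conj_mem_dihedralConjugates (by simp)
  · rw [← MulAut.mul_apply, ← map_mul, mul_self_mul_of_sq_eq_one hp]
    exact conj_mem_dihedralConjugates (by simp)
  · rw [← MulAut.mul_apply, ← map_mul, braid, map_mul, MulAut.mul_apply, conj_p]
    exact conj_mem_dihedralConjugates (by simp)

lemma right_mem_normalizer_dihedralConjugates (hq : q ^ 2 = 1) :
    q ∈ Subgroup.normalizer (dihedralConjugates p q d) := by
  refine mem_normalizer_of_sq_eq_one hq (forall_mem_dihedralConjugates.2 ⟨?_, ?_, ?_, ?_⟩)
  · exact conj_mem_dihedralConjugates (by simp)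
  · rw [← MulAut.mul_apply, ← map_mul, ← sq, hq]
    exact conj_mem_dihedralConjugates (by simp)
  · rw [← MulAut.mul_apply, ← map_mul, ← mul_assoc]
    exact conj_mem_dihedralConjugates (by simp)
  · rw [← MulAut.mul_apply, ← map_mul, mul_assoc q p q, mul_self_mul_of_sq_eq_one hq]
    exact conj_mem_dihedralConjugates (by simp)

lemma mem_normalizer_dihedralConjugates_of_commute {r : G} (hrq : Commute r q) (hrd : Commute r d)
    (hrpq : Commute r (MulAut.conj (p * q) d)) :
    r ∈ Subgroup.normalizer (dihedralConjugates p q d) := by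
  have commute_conj {s : G} (hs : Commute r s) : Commute r (MulAut.conj q s) :=
    (hrq.mul_right hs).mul_right hrq.inv_right
  refine Subgroup.centralizer_le_normalizer _ (Subgroup.mem_centralizer_iff.2 ?_)
  refine forall_mem_dihedralConjugates.2 ⟨hrd.symm, (commute_conj hrd).symm, hrpq.symm, ?_⟩
  rw [mul_assoc, map_mul, MulAut.mul_apply]
  exact (commute_conj hrpq).symm

lemma closure_dihedralConjugates_le {L : Subgroup G} (hp : p ∈ L) (hq : q ∈ L) (hd : d ∈ L) :
    Subgroup.closure (dihedralConjugates p q d) ≤ L := by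
  have conj_mem {t : G} (ht : t ∈ L) : MulAut.conj t d ∈ L :=
    mul_mem (mul_mem ht hd) (inv_mem ht)
  exact (Subgroup.closure_le L).2 (forall_mem_dihedralConjugates.2
    ⟨hd, conj_mem hq, conj_mem (mul_mem hp hq), conj_mem (mul_mem (mul_mem hq hp) hq)⟩)

end DihedralConjugates

section Relations

variable {G : Type*} [Group G] {a b c d : G}

/-- The defining relations of `Γ(1)`, imposed on elements `a, b, c, d` of an arbitrary group. -/
structure GammaOneRelations (a b c d : G) : Prop where
  a_sq : a ^ 2 = 1
  b_sq : b ^ 2 = 1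
  c_sq : c ^ 2 = 1
  d_sq : d ^ 2 = 1
  bcd : b * c * d = 1
  ad_pow_four : (a * d) ^ 4 = 1

/-- The defining relations of `Γ(2)`, imposed on elements `a, b, c, d` of an arbitrary group; the
relator `σ((ad)⁴)` is written out as `(aca · c)⁴`. -/
structure GammaTwoRelations (a b c d : G) : Prop extends GammaOneRelations a b c d where
  acac_pow_four : (a * c * a * c) ^ 4 = 1
  adacac_pow_four : (a * d * a * c * a * c) ^ 4 = 1

lemma sigma_ga : sigma ga = ga * gc * ga := by simp [sigma, ga]

lemma sigma_gb : sigma gb = gd := by simp [sigma, gb]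

lemma sigma_gc : sigma gc = gb := by simp [sigma, gc]

lemma sigma_gd : sigma gd = gc := by simp [sigma, gd]

lemma Rpres_one :
    Rpres 1 = {ga ^ 2, gb ^ 2, gc ^ 2, gd ^ 2, gb * gc * gd, (ga * gd) ^ 4} := by
  ext w
  simp only [Rpres, Set.mem_union, Set.mem_ofPred_eq]
  constructor
  · rintro ((hw | ⟨j, hj₁, hj₂, -⟩) | ⟨j, hj, -⟩)
    exacts [hw, by omega, by omega]
  · exact fun hw ↦ .inl (.inl hw)

lemma Rpres_two :
    Rpres 2 = Rpres 1 ∪ {sigma ((ga * gd) ^ 4), (ga * gd * ga * gc * ga * gc) ^ 4} := by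
  rw [Rpres_one]
  ext w
  simp only [Rpres, Set.mem_union, Set.mem_insert_iff, Set.mem_singleton_iff, Set.mem_ofPred_eq]
  constructor
  · rintro ((hw | ⟨j, hj₁, hj₂, rfl⟩) | ⟨j, hj, rfl⟩)
    · exact .inl hw
    · obtain rfl : j = 1 := by omega
      exact .inr (.inl rfl)
    · obtain rfl : j = 0 := by omega
      exact .inr (.inr rfl)
  · rintro (hw | rfl | rfl)
    exacts [.inl (.inl hw), .inl (.inr ⟨1, le_rfl, le_rfl, rfl⟩), .inr ⟨0, le_rfl, rfl⟩]

lemma normalClosure_Rpres_one_le_ker_iff {f : F4 →* G} :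
    Subgroup.normalClosure (Rpres 1) ≤ f.ker ↔
      GammaOneRelations (f ga) (f gb) (f gc) (f gd) := by
  rw [← Subgroup.normalClosure_subset_iff, Rpres_one]
  simp only [Set.insert_subset_iff, Set.singleton_subset_iff, SetLike.mem_coe, MonoidHom.mem_ker,
    map_mul, map_pow]
  exact ⟨fun ⟨ha, hb, hc, hd, hbcd, had⟩ ↦ ⟨ha, hb, hc, hd, hbcd, had⟩,
    fun h ↦ ⟨h.a_sq, h.b_sq, h.c_sq, h.d_sq, h.bcd, h.ad_pow_four⟩⟩

lemma normalClosure_Rpres_two_le_ker_iff {f : F4 →* G} :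
    Subgroup.normalClosure (Rpres 2) ≤ f.ker ↔
      GammaTwoRelations (f ga) (f gb) (f gc) (f gd) := by
  rw [← Subgroup.normalClosure_subset_iff, Rpres_two, Set.union_subset_iff,
    Subgroup.normalClosure_subset_iff, normalClosure_Rpres_one_le_ker_iff]
  simp only [Set.insert_subset_iff, Set.singleton_subset_iff, SetLike.mem_coe, MonoidHom.mem_ker,
    map_mul, map_pow, sigma_ga, sigma_gd]
  exact ⟨fun ⟨h, hac, hadac⟩ ↦ ⟨h, hac, hadac⟩,
    fun h ↦ ⟨h.toGammaOneRelations, h.acac_pow_four, h.adacac_pow_four⟩⟩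

lemma GammaOneRelations.b_eq (h : GammaOneRelations a b c d) : b = c * d := by
  have b_mul : b * (c * d) = 1 := by rw [← mul_assoc, h.bcd]
  rw [← inv_eq_self_of_sq_eq_one h.b_sq, inv_eq_of_mul_eq_one_right b_mul]

lemma GammaOneRelations.commute_c_d (h : GammaOneRelations a b c d) : Commute c d :=
  commute_of_sq_eq_one h.c_sq h.d_sq (h.b_eq ▸ h.b_sq)

lemma sq_adacac (a c d : G) :
    (a * d * a * c * a * c) ^ 2 = a * d * a * (c * (a * c * a) * d * (a * c * a) * c) := by
  simp only [sq, mul_assoc]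

/-- `σ` induces a homomorphism `Γ(1) → Γ(2)`. -/
lemma GammaTwoRelations.sigma (h : GammaTwoRelations a b c d) :
    GammaOneRelations (a * c * a) d b c where
  a_sq := mul_mul_self_sq_eq_one h.a_sq h.c_sq
  b_sq := h.d_sq
  c_sq := h.b_sq
  d_sq := h.c_sq
  bcd := by
    rw [h.b_eq, h.commute_c_d.eq, mul_self_mul_of_sq_eq_one h.d_sq, ← sq, h.c_sq]
  ad_pow_four := h.acac_pow_four

lemma GammaOneRelations.commute_aca_ada (h : GammaOneRelations a b c d) :
    Commute (a * c * a) (a * d * a) := by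
  simpa only [MulAut.conj_apply, inv_eq_self_of_sq_eq_one h.a_sq] using
    h.commute_c_d.map (MulAut.conj a)

lemma GammaOneRelations.commute_ada_d (h : GammaOneRelations a b c d) : Commute (a * d * a) d := by
  refine commute_of_sq_eq_one (mul_mul_self_sq_eq_one h.a_sq h.d_sq) h.d_sq ?_
  rw [← h.ad_pow_four, pow_mul _ 2 2]
  simp only [sq, mul_assoc]

lemma GammaTwoRelations.commute_ada_conj (h : GammaTwoRelations a b c d) :
    Commute (a * d * a) (MulAut.conj (c * (a * c * a)) d) := by
  refine commute_of_sq_eq_one (mul_mul_self_sq_eq_one h.a_sq h.d_sq) (conj_sq_eq_one h.d_sq) ?_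
  rw [MulAut.conj_apply, mul_inv_eq_swap_of_sq_eq_one h.c_sq h.sigma.a_sq, ← h.adacac_pow_four,
    pow_mul _ 2 2, sq_adacac]
  simp only [mul_assoc]

/-- The normal closure of `d` in the subgroup `⟨b, c, d, aba, aca, ada⟩`, when the relations of
`Γ(2)` hold. -/
def conjugateSubgroup (a c d : G) : Subgroup G :=
  Subgroup.closure (dihedralConjugates c (a * c * a) d)

lemma d_mem_conjugateSubgroup : d ∈ conjugateSubgroup a c d :=
  Subgroup.subset_closure self_mem_dihedralConjugates

lemma GammaTwoRelations.c_mem_normalizer (h : GammaTwoRelations a b c d) :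
    c ∈ Subgroup.normalizer (conjugateSubgroup a c d : Set G) :=
  Subgroup.normalizer_le_normalizer_closure _ (left_mem_normalizer_dihedralConjugates h.c_sq
    h.sigma.a_sq (mul_pow_swap_eq_one h.sigma.a_sq h.c_sq h.acac_pow_four) h.commute_c_d)

lemma GammaOneRelations.aca_mem_normalizer (h : GammaOneRelations a b c d) :
    a * c * a ∈ Subgroup.normalizer (conjugateSubgroup a c d : Set G) :=
  Subgroup.normalizer_le_normalizer_closure _
    (right_mem_normalizer_dihedralConjugates (mul_mul_self_sq_eq_one h.a_sq h.c_sq))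

lemma GammaTwoRelations.ada_mem_normalizer (h : GammaTwoRelations a b c d) :
    a * d * a ∈ Subgroup.normalizer (conjugateSubgroup a c d : Set G) :=
  Subgroup.normalizer_le_normalizer_closure _ (mem_normalizer_dihedralConjugates_of_commute
    h.commute_aca_ada.symm h.commute_ada_d h.commute_ada_conj)

lemma GammaTwoRelations.aba_mem_normalizer (h : GammaTwoRelations a b c d) :
    a * b * a ∈ Subgroup.normalizer (conjugateSubgroup a c d : Set G) := by
  have aba_eq : a * b * a = a * c * a * (a * d * a) := by
    rw [h.b_eq]
    simp only [mul_assoc, mul_self_mul_of_sq_eq_one h.a_sq]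
  rw [aba_eq]
  exact mul_mem h.aca_mem_normalizer h.ada_mem_normalizer

end Relations

section Wreath

open SemidirectProduct

variable {G : Type*} [Group G]

/-- The extension of `(q × q) ∘ ψ₀` to `F` in which `a` acts as the coordinate swap. It takes
values in the wreath product of `G` with `ℤ/2`, realized here inside the holomorph of `G × G`. -/
def wreath (q : F4 →* G) : F4 →* (G × G) ⋊[MonoidHom.id (MulAut (G × G))] MulAut (G × G) :=
  FreeGroup.lift fun
    | .a => inr MulEquiv.prodComm
    | .b => inl (q ga, q gc)
    | .c => inl (q ga, q gd)
    | .d => inl (1, q gb)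

variable {q : F4 →* G}

lemma inl_pow_eq_one_iff {x y : G} {n : ℕ} :
    (inl (x, y) : (G × G) ⋊[MonoidHom.id (MulAut (G × G))] MulAut (G × G)) ^ n = 1 ↔
      x ^ n = 1 ∧ y ^ n = 1 := by
  rw [← map_pow, map_eq_one_iff _ inl_injective, Prod.pow_mk, Prod.mk_eq_one]

lemma wreath_ga : wreath q ga = inr MulEquiv.prodComm := by simp [wreath, ga]

lemma wreath_gb : wreath q gb = inl (q ga, q gc) := by simp [wreath, gb]

lemma wreath_gc : wreath q gc = inl (q ga, q gd) := by simp [wreath, gc]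

lemma wreath_gd : wreath q gd = inl (1, q gb) := by simp [wreath, gd]

lemma wreath_ga_sq : wreath q ga ^ 2 = 1 := by
  rw [wreath_ga, ← map_pow, ← map_one inr]
  congr 1

lemma wreath_ga_mul_inl_mul_wreath_ga (x y : G) :
    wreath q ga * inl (x, y) * wreath q ga = inl (y, x) := by
  nth_rw 2 [← inv_eq_self_of_sq_eq_one (wreath_ga_sq (q := q))]
  rw [wreath_ga, ← map_inv, ← inl_aut]
  simp

lemma wreath_iota (e : FreeGroup E7) :
    wreath q (iota e) = inl (q.prodMap q (psi e)) := by
  suffices (wreath q).comp iota = inl.comp ((q.prodMap q).comp psi) from DFunLike.congr_fun this e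
  refine FreeGroup.ext_hom _ _ fun x ↦ ?_
  cases x <;>
    simp [iota, psi, wreath_gb, wreath_gc, wreath_gd, wreath_ga_mul_inl_mul_wreath_ga,
      wreath_ga_sq, Prod.map_def, Prod.mk_one_one]

lemma gammaTwoRelations_wreath (h : GammaOneRelations (q ga) (q gb) (q gc) (q gd)) :
    GammaTwoRelations (wreath q ga) (wreath q gb) (wreath q gc) (wreath q gd) where
  a_sq := wreath_ga_sq
  b_sq := by rw [wreath_gb, inl_pow_eq_one_iff]; exact ⟨h.a_sq, h.c_sq⟩
  c_sq := by rw [wreath_gc, inl_pow_eq_one_iff]; exact ⟨h.a_sq, h.d_sq⟩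
  d_sq := by rw [wreath_gd, inl_pow_eq_one_iff]; exact ⟨one_pow 2, h.b_sq⟩
  bcd := by
    have cdb : q gc * q gd * q gb = 1 := by rw [← h.b_eq, ← sq, h.b_sq]
    rw [wreath_gb, wreath_gc, wreath_gd, ← map_mul, ← map_mul, Prod.mk_mul_mk, Prod.mk_mul_mk,
      cdb, ← sq, h.a_sq, mul_one, ← Prod.one_eq_mk, map_one]
  ad_pow_four := by
    have ad_sq : (wreath q ga * wreath q gd) ^ 2 = inl (q gb, q gb) := by
      rw [sq, ← mul_assoc, wreath_gd, wreath_ga_mul_inl_mul_wreath_ga, ← map_mul, Prod.mk_mul_mk,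
        mul_one, one_mul]
    rw [pow_mul _ 2 2, ad_sq, inl_pow_eq_one_iff]
    exact ⟨h.b_sq, h.b_sq⟩
  acac_pow_four := by
    rw [wreath_gc, wreath_ga_mul_inl_mul_wreath_ga, ← map_mul, inl_pow_eq_one_iff]
    exact ⟨mul_pow_swap_eq_one h.a_sq h.d_sq h.ad_pow_four, h.ad_pow_four⟩
  adacac_pow_four := by
    have adacac_sq : (wreath q ga * wreath q gd * wreath q ga * wreath q gc * wreath q ga *
        wreath q gc) ^ 2 = inl (q gb, MulAut.conj (q gd * q ga) (q gb)) := by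
      rw [sq_adacac, wreath_gc, wreath_gd, wreath_ga_mul_inl_mul_wreath_ga,
        wreath_ga_mul_inl_mul_wreath_ga]
      simp only [← map_mul inl, Prod.mk_mul_mk, MulAut.conj_apply,
        mul_inv_eq_swap_of_sq_eq_one h.d_sq h.a_sq]
      simp only [mul_assoc, one_mul, mul_self_mul_of_sq_eq_one h.d_sq]
      rw [← sq (q ga), h.a_sq, mul_one]
    rw [pow_mul _ 2 2, adacac_sq, inl_pow_eq_one_iff]
    exact ⟨h.b_sq, conj_sq_eq_one h.b_sq⟩

lemma psi_mem_prod_of_iota_mem {e : FreeGroup E7}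
    (he : iota e ∈ Subgroup.normalClosure (Rpres 2)) :
    psi e ∈ (Subgroup.normalClosure (Rpres 1)).prod (Subgroup.normalClosure (Rpres 1)) := by
  let q := QuotientGroup.mk' (Subgroup.normalClosure (Rpres 1))
  have rels : GammaOneRelations (q ga) (q gb) (q gc) (q gd) :=
    normalClosure_Rpres_one_le_ker_iff.1 (QuotientGroup.ker_mk' _).ge
  have wreath_eq_one : wreath q (iota e) = 1 :=
    normalClosure_Rpres_two_le_ker_iff.2 (gammaTwoRelations_wreath rels) he
  rw [wreath_iota, map_eq_one_iff _ inl_injective, Prod.ext_iff] at wreath_eq_one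
  simpa only [Subgroup.mem_prod, q, MonoidHom.coe_prodMap, Prod.map_fst, Prod.map_snd,
    Prod.fst_one, Prod.snd_one, QuotientGroup.mk'_apply, QuotientGroup.eq_one_iff]
    using wreath_eq_one

end Wreath

section Sections

variable {G : Type*} [Group G] (q : F4 →* G)

/-- The map `e ↦ a · σ((ψ₀ e).1) · a⁻¹`, which agrees with the inclusion `iota` modulo `d` once the
relations of `Γ(2)` are imposed. -/
def fstSection : FreeGroup E7 →* G :=
  ((MulAut.conj (q ga)).toMonoidHom.comp (q.comp sigma)).comp ((MonoidHom.fst F4 F4).comp psi)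

/-- The map `e ↦ σ((ψ₀ e).2)`, which agrees with the inclusion `iota` on `c`, `d` and `aca`. -/
def sndSection : FreeGroup E7 →* G :=
  (q.comp sigma).comp ((MonoidHom.snd F4 F4).comp psi)

variable {q}

lemma normalClosure_Rpres_one_le_ker_comp_sigma
    (h : GammaTwoRelations (q ga) (q gb) (q gc) (q gd)) :
    Subgroup.normalClosure (Rpres 1) ≤ (q.comp sigma).ker := by
  rw [normalClosure_Rpres_one_le_ker_iff]
  simpa only [MonoidHom.comp_apply, sigma_ga, sigma_gb, sigma_gc, sigma_gd, map_mul] using h.sigma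

lemma fstSection_eq_one (h : GammaTwoRelations (q ga) (q gb) (q gc) (q gd)) {e : FreeGroup E7}
    (he : (psi e).1 ∈ Subgroup.normalClosure (Rpres 1)) : fstSection q e = 1 := by
  have sigma_eq_one : q.comp sigma (psi e).1 = 1 := normalClosure_Rpres_one_le_ker_comp_sigma h he
  change MulAut.conj (q ga) (q.comp sigma (psi e).1) = 1
  rw [sigma_eq_one, map_one]

lemma sndSection_eq_one (h : GammaTwoRelations (q ga) (q gb) (q gc) (q gd)) {e : FreeGroup E7}
    (he : (psi e).2 ∈ Subgroup.normalClosure (Rpres 1)) : sndSection q e = 1 :=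
  normalClosure_Rpres_one_le_ker_comp_sigma h he

lemma fstSection_of (ha : q ga ^ 2 = 1) (x : E7) :
    fstSection q (FreeGroup.of x) = match x with
      | .eb | .ec => q gc
      | .ed | .eaa => 1
      | .eaba => q ga * q gb * q ga
      | .eaca => q ga * q gc * q ga
      | .eada => q ga * q gd * q ga := by
  cases x <;>
    simp [fstSection, psi, sigma_ga, sigma_gb, sigma_gc, sigma_gd, mul_assoc,
      mul_self_mul_of_sq_eq_one ha, inv_eq_self_of_sq_eq_one ha, ← sq, ha]

lemma fstSection_of_mem_normalizer (h : GammaTwoRelations (q ga) (q gb) (q gc) (q gd)) (x : E7) :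
    fstSection q (FreeGroup.of x) ∈
      Subgroup.normalizer (conjugateSubgroup (q ga) (q gc) (q gd) : Set G) := by
  rw [fstSection_of h.a_sq]
  cases x
  exacts [h.c_mem_normalizer, h.c_mem_normalizer, one_mem _, h.aba_mem_normalizer,
    h.aca_mem_normalizer, h.ada_mem_normalizer, one_mem _]

lemma iota_mul_inv_fstSection_mem (h : GammaTwoRelations (q ga) (q gb) (q gc) (q gd))
    (e : FreeGroup E7) :
    q (iota e) * (fstSection q e)⁻¹ ∈ conjugateSubgroup (q ga) (q gc) (q gd) := by
  refine map_mul_inv_map_mem_of_forall_of_mem (f := q.comp iota) (fstSection_of_mem_normalizer h)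
    (fun x ↦ ?_) e
  have b_mul_inv_c : q gb * (q gc)⁻¹ = q gd := by
    rw [h.b_eq, h.commute_c_d.eq, mul_inv_cancel_right]
  rw [fstSection_of h.a_sq]
  cases x <;> simp [iota, b_mul_inv_c, d_mem_conjugateSubgroup, h.a_sq]

lemma conjugateSubgroup_le_map_eqLocus :
    conjugateSubgroup (q ga) (q gc) (q gd) ≤
      ((q.comp iota).eqLocus (sndSection q)).map (q.comp iota) := by
  have mem_map {x : E7} {g : G} (hiota : q (iota (FreeGroup.of x)) = g)
      (hsnd : sndSection q (FreeGroup.of x) = g) :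
      g ∈ ((q.comp iota).eqLocus (sndSection q)).map (q.comp iota) :=
    ⟨FreeGroup.of x, hiota.trans hsnd.symm, hiota⟩
  refine closure_dihedralConjugates_le (mem_map (x := .ec) ?_ ?_) (mem_map (x := .eaca) ?_ ?_)
    (mem_map (x := .ed) ?_ ?_) <;> simp [iota, sndSection, psi, sigma_ga, sigma_gb, sigma_gd]

lemma iota_mem_of_psi_mem_prod {e : FreeGroup E7}
    (he : psi e ∈ (Subgroup.normalClosure (Rpres 1)).prod (Subgroup.normalClosure (Rpres 1))) :
    iota e ∈ Subgroup.normalClosure (Rpres 2) := by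
  let q := QuotientGroup.mk' (Subgroup.normalClosure (Rpres 2))
  have ker_q : q.ker = Subgroup.normalClosure (Rpres 2) := QuotientGroup.ker_mk' _
  have rels : GammaTwoRelations (q ga) (q gb) (q gc) (q gd) :=
    normalClosure_Rpres_two_le_ker_iff.1 ker_q.ge
  have iota_mem : q (iota e) ∈ conjugateSubgroup (q ga) (q gc) (q gd) := by
    simpa only [fstSection_eq_one rels he.1, inv_one, mul_one] using
      iota_mul_inv_fstSection_mem rels e
  obtain ⟨z, z_mem, iota_z_eq : q (iota z) = q (iota e)⟩ :=
    conjugateSubgroup_le_map_eqLocus iota_mem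
  have iota_z_eq_snd : q (iota z) = sndSection q z := z_mem
  have div_mem : iota (z * e⁻¹) ∈ Subgroup.normalClosure (Rpres 2) := by
    rw [← ker_q, MonoidHom.mem_ker, map_mul, map_mul, map_inv, map_inv, iota_z_eq, mul_inv_cancel]
  have snd_z_eq : sndSection q z = sndSection q e := by
    rw [← mul_inv_eq_one, ← map_inv, ← map_mul]
    exact sndSection_eq_one rels (psi_mem_prod_of_iota_mem div_mem).2
  rw [← ker_q, MonoidHom.mem_ker, ← iota_z_eq, iota_z_eq_snd, snd_z_eq,
    sndSection_eq_one rels he.2]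

end Sections

end KerPsi

/-- for `h ∈ H(0)`, `ψ₀(h) ∈ N(1) × N(1)` if and only if
`h ∈ N(2)`; i.e. the kernel of the induced map `ψ₁ : H(1) → Γ(1) × Γ(1)`
is `N(2)/N(1)`. -/
theorem ker_psi_one :
    ∀ e : FreeGroup E7,
      psi e ∈ (Subgroup.normalClosure (Rpres 1)).prod
                (Subgroup.normalClosure (Rpres 1)) ↔
        iota e ∈ Subgroup.normalClosure (Rpres 2) :=
  fun _ ↦ ⟨KerPsi.iota_mem_of_psi_mem_prod, KerPsi.psi_mem_prod_of_iota_mem⟩
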